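/- arXiv:1908.08698 — 2 statements merged into one kernel-verified Lean document; each statement's English description precedes it below -/
import Mathlib

section
/- Let H be a real Hilbert space, H₀ ⊆ H a closed subspace, and a : H × H → ℝ a symmetric bilinear form for which there exist constants 0 < κ₁ ≤ κ₂ with κ₁‖u‖² ≤ a(u,u) and |a(u,v)| ≤ κ₂‖u‖‖v‖ for all u, v ∈ H. Then for every u ∈ H one has ‖u‖ ≤ C · ( sup{ a(u,φ)/‖φ‖ : φ ∈ H₀, φ ≠ 0 } + inf{ ‖u − w‖ : w ∈ H₀ } ), where one may take C = (1 + κ₂)/κ₁; in particular the constant C depends only on κ₁ and κ₂ and not on H or H₀. -/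
/-!
Let `w` be the orthogonal projection of `u` onto `H₀`, so that `‖w‖ ≤ ‖u‖` and `‖u - w‖` is the
distance `d` from `u` to `H₀`. With `S` the supremum in the statement,
`κ₁‖u‖² ≤ a(u,u) = a(u,w) + a(u,u-w) ≤ S‖w‖ + κ₂‖u‖d ≤ ‖u‖(S + κ₂ d)`.
Since `S, d ≥ 0`, dividing by `κ₁‖u‖` gives the bound.
-/

/-- Let `H` be a real Hilbert space, `H₀ ⊆ H` a closed subspace, and
`a : H × H → ℝ` a symmetric bilinear form with `κ₁‖u‖² ≤ a(u,u)` and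
`|a(u,v)| ≤ κ₂‖u‖‖v‖` for constants `0 < κ₁ ≤ κ₂`.  Then for every `u ∈ H`,
`‖u‖ ≤ C (sup {a(u,φ)/‖φ‖ : φ ∈ H₀, φ ≠ 0} + inf {‖u - w‖ : w ∈ H₀})`,
with `C = (1 + κ₂)/κ₁` depending only on `κ₁, κ₂`. -/
theorem stmt_0 {H : Type*} [NormedAddCommGroup H] [InnerProductSpace ℝ H] [CompleteSpace H]
    (H₀ : Submodule ℝ H) (hH₀ : IsClosed (H₀ : Set H))
    (a : H →ₗ[ℝ] H →ₗ[ℝ] ℝ)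
    (hsymm : ∀ u v : H, a u v = a v u)
    (κ₁ κ₂ : ℝ) (hκ₁ : 0 < κ₁) (hκ₁₂ : κ₁ ≤ κ₂)
    (hcoer : ∀ u : H, κ₁ * ‖u‖ ^ 2 ≤ a u u)
    (hbound : ∀ u v : H, |a u v| ≤ κ₂ * ‖u‖ * ‖v‖) :
    ∀ u : H, ‖u‖ ≤ (1 + κ₂) / κ₁ *
      (sSup {s : ℝ | ∃ φ : H, φ ∈ H₀ ∧ φ ≠ 0 ∧ s = a u φ / ‖φ‖} +
        sInf {t : ℝ | ∃ w : H, w ∈ H₀ ∧ t = ‖u - w‖}) := by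
  intro u
  have : CompleteSpace H₀ := hH₀.completeSpace_coe
  set A := {s : ℝ | ∃ φ : H, φ ∈ H₀ ∧ φ ≠ 0 ∧ s = a u φ / ‖φ‖}
  set B := {t : ℝ | ∃ w : H, w ∈ H₀ ∧ t = ‖u - w‖}
  have hA : BddAbove A := by
    refine ⟨κ₂ * ‖u‖, ?_⟩
    rintro s ⟨φ, -, hφ, rfl⟩
    rw [div_le_iff₀ (norm_pos_iff.mpr hφ)]
    exact (le_abs_self _).trans (hbound u φ)
  have hle : ∀ φ ∈ H₀, a u φ ≤ sSup A * ‖φ‖ := by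
    intro φ hφ
    rcases eq_or_ne φ 0 with rfl | h0
    · simp
    · rw [← div_le_iff₀ (norm_pos_iff.mpr h0)]
      exact le_csSup hA ⟨φ, hφ, h0, rfl⟩
  -- `A` is symmetric about `0`; if `H₀ = 0` it is empty and its `sSup` is `0` by convention.
  have hS : 0 ≤ sSup A := by
    rcases A.eq_empty_or_nonempty with h | ⟨-, φ, hφ, h0, -⟩
    · simp [h]
    · have h1 := hle φ hφ
      have h2 := hle (-φ) (H₀.neg_mem hφ)
      rw [map_neg, norm_neg] at h2
      have h3 : 0 < ‖φ‖ := norm_pos_iff.mpr h0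
      by_contra! h
      nlinarith
  set w := H₀.starProjection u with hw
  have hwmem : w ∈ H₀ := H₀.starProjection_apply_mem u
  have hwn : ‖w‖ ≤ ‖u‖ := H₀.norm_starProjection_apply_le u
  have hd : ‖u - w‖ ≤ sInf B := by
    refine le_csInf ⟨_, w, hwmem, rfl⟩ ?_
    rintro t ⟨v, hv, rfl⟩
    rw [hw, H₀.starProjection_minimal]
    exact ciInf_le ⟨0, by rintro _ ⟨x, rfl⟩; exact norm_nonneg _⟩ (⟨v, hv⟩ : H₀)
  have hκ₂ : 0 < κ₂ := hκ₁.trans_le hκ₁₂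
  have hB : 0 ≤ sInf B := (norm_nonneg _).trans hd
  rcases (norm_nonneg u).eq_or_lt with h0 | h0
  · rw [← h0]
    positivity
  have hsplit : a u u = a u w + a u (u - w) := by rw [← map_add, add_sub_cancel]
  have h1 : a u w ≤ sSup A * ‖u‖ := (hle w hwmem).trans (by gcongr)
  have h2 : a u (u - w) ≤ κ₂ * ‖u‖ * sInf B :=
    (le_abs_self _).trans ((hbound u (u - w)).trans (by gcongr))
  have h3 : κ₁ * ‖u‖ ≤ sSup A + κ₂ * sInf B := by
    refine le_of_mul_le_mul_right ?_ h0
    linarith [hcoer u]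
  rw [div_mul_eq_mul_div, le_div_iff₀ hκ₁]
  linarith [mul_nonneg hκ₂.le hS]
end

section
/- Let b : ℝ² → ℝ² be a smooth vector field that is ℤ²-periodic (b(x + z) = b(x) for all x ∈ ℝ² and z ∈ ℤ²) and divergence-free (∂₁b₁(x) + ∂₂b₂(x) = 0 for all x). Suppose c : ℝ² → ℝ² is a smooth ℤ²-periodic vector field satisfying the Poisson equations Δc_i = −b_i on ℝ² for i = 1, 2, where Δ is the Laplacian (sum of pure second partial derivatives). Then: (i) the function x ↦ ∂₁c₁(x) + ∂₂c₂(x) is constant on ℝ²; and (ii) the matrix field G defined by G_{ij} := ∂_i c_j − ∂_j c_i is pointwise skew-symmetric (G_{ij} = −G_{ji}) and satisfies Σ_j ∂_j G_{ij}(x) = b_i(x) for all x ∈ ℝ² and i = 1, 2. -/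
/-!
The divergence `d = ∑ ∂ᵢcᵢ` is periodic, and since partial derivatives commute it satisfies
`Δd = ∑ ∂ᵢ(Δcᵢ) = -∑ ∂ᵢbᵢ = 0`. A continuous periodic function is bounded, and a bounded
harmonic function `u` on the plane is constant (`const_of_harmonic_of_periodic`): identifying
`ℝ²` with `ℂ`, `u` is the real part of an entire function `F`, so `exp ∘ F` is entire and
bounded by `exp (sup u)`; Liouville's theorem makes `|exp ∘ F| = exp u` constant. Hence `d` is
constant, and
`∑ⱼ ∂ⱼ(∂ᵢcⱼ - ∂ⱼcᵢ) = ∂ᵢd - Δcᵢ = bᵢ`.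
-/

/-- The directional derivative of `f` in the direction `v`, as a function of the base point. -/
noncomputable def pd (v : EuclideanSpace ℝ (Fin 2)) (f : EuclideanSpace ℝ (Fin 2) → ℝ) :
    EuclideanSpace ℝ (Fin 2) → ℝ :=
  fun x => fderiv ℝ f x v

lemma two_le_smooth : (2 : WithTop ℕ∞) ≤ ((⊤ : ℕ∞) : WithTop ℕ∞) :=
  WithTop.coe_le_coe.2 (le_top : (2 : ℕ∞) ≤ ⊤)

lemma contDiff_pd {f : EuclideanSpace ℝ (Fin 2) → ℝ} (hf : ContDiff ℝ (⊤ : ℕ∞) f)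
    (v : EuclideanSpace ℝ (Fin 2)) : ContDiff ℝ (⊤ : ℕ∞) (pd v f) :=
  (hf.fderiv_right (m := (⊤ : ℕ∞)) (by simp)).clm_apply contDiff_const

lemma pd_sum {f : Fin 2 → EuclideanSpace ℝ (Fin 2) → ℝ}
    (hf : ∀ i, ContDiff ℝ (⊤ : ℕ∞) (f i)) (v : EuclideanSpace ℝ (Fin 2)) :
    pd v (fun y => ∑ i, f i y) = fun x => ∑ i, pd v (f i) x := by
  funext x
  unfold pd
  rw [fderiv_fun_sum fun i _ => ((hf i).differentiable (by simp)) x]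
  simp

lemma pd_comm {f : EuclideanSpace ℝ (Fin 2) → ℝ} (hf : ContDiff ℝ (⊤ : ℕ∞) f)
    (v w : EuclideanSpace ℝ (Fin 2)) : pd v (pd w f) = pd w (pd v f) := by
  funext x
  have hd : DifferentiableAt ℝ (fderiv ℝ f) x :=
    ((hf.fderiv_right (m := (⊤ : ℕ∞)) (by simp)).differentiable (by simp)) x
  have key : ∀ a b, pd a (pd b f) x = fderiv ℝ (fderiv ℝ f) x a b := by
    intro a b
    unfold pd
    rw [fderiv_clm_apply hd (by fun_prop)]
    simp
  rw [key, key]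
  exact (hf.contDiffAt.isSymmSndFDerivAt (by simpa using two_le_smooth)) v w

lemma pd_periodic {f : EuclideanSpace ℝ (Fin 2) → ℝ} {a : EuclideanSpace ℝ (Fin 2)}
    (hf : ∀ x, f (x + a) = f x) (v x : EuclideanSpace ℝ (Fin 2)) :
    pd v f (x + a) = pd v f x := by
  unfold pd
  rw [← fderiv_comp_add_right, funext hf]

lemma bounded_of_periodic {u : EuclideanSpace ℝ (Fin 2) → ℝ} (hu : Continuous u)
    (hper : ∀ (x : EuclideanSpace ℝ (Fin 2)) (z : Fin 2 → ℤ),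
      u (x + (WithLp.equiv 2 (Fin 2 → ℝ)).symm (fun i => (z i : ℝ))) = u x) :
    ∃ C, ∀ x, u x ≤ C := by
  obtain ⟨C, hC⟩ := (isCompact_closedBall (0 : EuclideanSpace ℝ (Fin 2)) 2).bddAbove_image
    hu.continuousOn
  refine ⟨C, fun x => ?_⟩
  -- Translate `x` to the vector of its fractional parts.
  rw [← hper x (fun i => -⌊x i⌋)]
  refine hC ⟨_, ?_, rfl⟩
  rw [mem_closedBall_zero_iff, EuclideanSpace.norm_eq, Real.sqrt_le_left (by norm_num)]
  have h : ∀ i : Fin 2, ‖x i + -(⌊x i⌋ : ℝ)‖ ^ 2 ≤ 1 := by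
    intro i
    have h1 := Int.floor_le (x i)
    have h2 := Int.lt_floor_add_one (x i)
    rw [Real.norm_eq_abs, sq_abs]
    nlinarith
  have h0 := h 0
  have h1 := h 1
  simp only [Real.norm_eq_abs, sq_abs] at h0 h1
  simp [Fin.sum_univ_two]
  linarith

lemma fderiv_comp_repr {u : EuclideanSpace ℝ (Fin 2) → ℝ} (hu : ContDiff ℝ (⊤ : ℕ∞) u)
    (z w : ℂ) :
    fderiv ℝ (fun z => u (Complex.orthonormalBasisOneI.repr z)) z w
      = pd (Complex.orthonormalBasisOneI.repr w) u (Complex.orthonormalBasisOneI.repr z) := by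
  have h1 : HasFDerivAt (fun z : ℂ => Complex.orthonormalBasisOneI.repr z)
      (Complex.orthonormalBasisOneI.repr.toContinuousLinearEquiv : ℂ →L[ℝ] _) z :=
    Complex.orthonormalBasisOneI.repr.toContinuousLinearEquiv.hasFDerivAt
  have h2 := ((hu.differentiable (by simp)) (Complex.orthonormalBasisOneI.repr z)).hasFDerivAt
  exact congrArg (fun A : ℂ →L[ℝ] ℝ => A w) (h2.comp z h1).fderiv

lemma const_of_harmonic_of_periodic {u : EuclideanSpace ℝ (Fin 2) → ℝ}
    (hu : ContDiff ℝ (⊤ : ℕ∞) u)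
    (hper : ∀ (x : EuclideanSpace ℝ (Fin 2)) (z : Fin 2 → ℤ),
      u (x + (WithLp.equiv 2 (Fin 2 → ℝ)).symm (fun i => (z i : ℝ))) = u x)
    (hharm : ∀ x, ∑ j : Fin 2,
      pd (EuclideanSpace.single j 1) (pd (EuclideanSpace.single j 1) u) x = 0) :
    ∃ k, ∀ x, u x = k := by
  set L := Complex.orthonormalBasisOneI.repr with hL
  have hL0 : L 1 = EuclideanSpace.single 0 1 := by
    ext i; fin_cases i <;> simp [hL]
  have hL1 : L Complex.I = EuclideanSpace.single 1 1 := by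
    ext i; fin_cases i <;> simp [hL]
  have hf : ContDiff ℝ (⊤ : ℕ∞) (fun z : ℂ => u (L z)) :=
    hu.comp L.toContinuousLinearEquiv.contDiff
  have hdf (z : ℂ) : DifferentiableAt ℝ (fderiv ℝ (fun z : ℂ => u (L z))) z :=
    ((hf.fderiv_right (m := (⊤ : ℕ∞)) (by simp)).differentiable (by simp)) z
  have h2 (z w : ℂ) : iteratedFDeriv ℝ 2 (fun z : ℂ => u (L z)) z ![w, w]
      = pd (L w) (pd (L w) u) (L z) := by
    rw [iteratedFDeriv_two_apply, hL, ← fderiv_comp_repr (contDiff_pd hu _)]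
    simp only [← fderiv_comp_repr hu]
    rw [fderiv_clm_apply (hdf z) (by fun_prop)]
    simp [hL]
  have hH : InnerProductSpace.HarmonicOnNhd (fun z : ℂ => u (L z)) Set.univ := by
    intro z _
    refine ⟨(hf.of_le two_le_smooth).contDiffAt, Filter.Eventually.of_forall ?_⟩
    intro w
    rw [InnerProductSpace.laplacian_eq_iteratedFDeriv_complexPlane]
    simp only [h2, hL0, hL1]
    simpa [Fin.sum_univ_two] using hharm (L w)
  obtain ⟨F, hF, hFu⟩ := hH.exists_analyticOnNhd_univ_re_eq
  have hFd : Differentiable ℂ F := fun z => (hF z (Set.mem_univ z)).differentiableAt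
  obtain ⟨C, hC⟩ := bounded_of_periodic hu.continuous hper
  have hre (z : ℂ) : ‖Complex.exp (F z)‖ = Real.exp (u (L z)) := by
    rw [Complex.norm_exp]; exact congrArg Real.exp (congrFun hFu z)
  have hb : Bornology.IsBounded (Set.range fun z => Complex.exp (F z)) := by
    refine isBounded_iff_forall_norm_le.2 ⟨Real.exp C, ?_⟩
    rintro _ ⟨z, rfl⟩
    simpa only [hre] using Real.exp_le_exp.2 (hC (L z))
  refine ⟨u 0, fun x => ?_⟩
  have h := congrArg norm (hFd.cexp.apply_eq_apply_of_bounded hb (L.symm x) 0)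
  simpa [hre] using h

/-- Let `b : ℝ² → ℝ²` be a smooth, `ℤ²`-periodic, divergence-free vector
field and let `c : ℝ² → ℝ²` be a smooth `ℤ²`-periodic vector field with `Δcᵢ = -bᵢ`.
Then (i) `x ↦ ∂₁c₁(x) + ∂₂c₂(x)` is constant, and (ii) `G_{ij} := ∂ᵢc_j - ∂_jcᵢ` is
pointwise skew-symmetric and satisfies `∑_j ∂_j G_{ij} = bᵢ`. -/
theorem stmt_2 (b c : EuclideanSpace ℝ (Fin 2) → EuclideanSpace ℝ (Fin 2))
    (hb : ContDiff ℝ (⊤ : ℕ∞) b) (hc : ContDiff ℝ (⊤ : ℕ∞) c)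
    (hbper : ∀ (x : EuclideanSpace ℝ (Fin 2)) (z : Fin 2 → ℤ),
      b (x + (WithLp.equiv 2 (Fin 2 → ℝ)).symm (fun i => (z i : ℝ))) = b x)
    (hcper : ∀ (x : EuclideanSpace ℝ (Fin 2)) (z : Fin 2 → ℤ),
      c (x + (WithLp.equiv 2 (Fin 2 → ℝ)).symm (fun i => (z i : ℝ))) = c x)
    (hdiv : ∀ x : EuclideanSpace ℝ (Fin 2),
      ∑ i : Fin 2, fderiv ℝ (fun y => b y i) x (EuclideanSpace.single i 1) = 0)
    (hpoisson : ∀ (i : Fin 2) (x : EuclideanSpace ℝ (Fin 2)),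
      ∑ j : Fin 2, fderiv ℝ (fun y => fderiv ℝ (fun y' => c y' i) y (EuclideanSpace.single j 1))
          x (EuclideanSpace.single j 1) = - b x i)
    (G : EuclideanSpace ℝ (Fin 2) → Matrix (Fin 2) (Fin 2) ℝ)
    (hG : ∀ (x : EuclideanSpace ℝ (Fin 2)) (i j : Fin 2),
      G x i j = fderiv ℝ (fun y => c y j) x (EuclideanSpace.single i 1) -
        fderiv ℝ (fun y => c y i) x (EuclideanSpace.single j 1)) :
    (∃ k : ℝ, ∀ x : EuclideanSpace ℝ (Fin 2),
        ∑ i : Fin 2, fderiv ℝ (fun y => c y i) x (EuclideanSpace.single i 1) = k) ∧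
      (∀ (x : EuclideanSpace ℝ (Fin 2)) (i j : Fin 2), G x i j = - G x j i) ∧
      (∀ (x : EuclideanSpace ℝ (Fin 2)) (i : Fin 2),
        ∑ j : Fin 2, fderiv ℝ (fun y => G y i j) x (EuclideanSpace.single j 1) = b x i) := by
  have hci (i : Fin 2) : ContDiff ℝ (⊤ : ℕ∞) (fun y => c y i) := contDiff_euclidean.1 hc i
  set e : Fin 2 → EuclideanSpace ℝ (Fin 2) := fun i => EuclideanSpace.single i 1 with he
  set d : EuclideanSpace ℝ (Fin 2) → ℝ := fun x => ∑ i, pd (e i) (fun y => c y i) x with hd_def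
  have hd : ContDiff ℝ (⊤ : ℕ∞) d := ContDiff.sum fun i _ => contDiff_pd (hci i) _
  have hlap (i : Fin 2) : (fun x => ∑ j, pd (e j) (pd (e j) fun y => c y i) x)
      = fun x => - b x i := funext fun x => hpoisson i x
  have hdper (x : EuclideanSpace ℝ (Fin 2)) (z : Fin 2 → ℤ) :
      d (x + (WithLp.equiv 2 (Fin 2 → ℝ)).symm (fun i => (z i : ℝ))) = d x :=
    Finset.sum_congr rfl fun i _ =>
      pd_periodic (fun x => congrArg (fun p : EuclideanSpace ℝ (Fin 2) => p i) (hcper x z)) _ x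
  have hharm (x : EuclideanSpace ℝ (Fin 2)) : ∑ j, pd (e j) (pd (e j) d) x = 0 := by
    have h1 (j : Fin 2) : pd (e j) (pd (e j) d)
        = fun x => ∑ i, pd (e i) (pd (e j) (pd (e j) fun y => c y i)) x := by
      rw [hd_def, pd_sum fun i => contDiff_pd (hci i) _,
        pd_sum fun i => contDiff_pd (contDiff_pd (hci i) _) _]
      funext x
      refine Finset.sum_congr rfl fun i _ => ?_
      rw [pd_comm (hci i), pd_comm (contDiff_pd (hci i) _)]
    have h2 (i : Fin 2) : ∑ j, pd (e i) (pd (e j) (pd (e j) fun y => c y i)) x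
        = - pd (e i) (fun y => b y i) x := by
      rw [← congrFun (pd_sum (fun j => contDiff_pd (contDiff_pd (hci i) (e j)) (e j)) (e i)) x,
        hlap]
      simp [pd, fderiv_fun_neg]
    simp only [h1]
    rw [Finset.sum_comm]
    simp only [h2, Finset.sum_neg_distrib, neg_eq_zero]
    exact hdiv x
  obtain ⟨k, hk⟩ := const_of_harmonic_of_periodic hd hdper hharm
  refine ⟨⟨k, hk⟩, fun x i j => by rw [hG, hG]; ring, fun x i => ?_⟩
  have hGf (j : Fin 2) : pd (e j) (fun y => G y i j) x
      = pd (e i) (pd (e j) fun y => c y j) x - pd (e j) (pd (e j) fun y => c y i) x := by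
    have h : (fun y => G y i j) = fun y => pd (e i) (fun y => c y j) y
        - pd (e j) (fun y => c y i) y := funext fun y => hG y i j
    rw [h, pd_comm (hci j)]
    conv_lhs => unfold pd
    rw [fderiv_fun_sub]
    · rfl
    · exact (contDiff_pd (hci j) (e i)).differentiable (by simp) x
    · exact (contDiff_pd (hci i) (e j)).differentiable (by simp) x
  have hgrad : ∑ j, pd (e i) (pd (e j) fun y => c y j) x = 0 := by
    rw [← congrFun (pd_sum (fun j => contDiff_pd (hci j) (e j)) (e i)) x]
    change pd (e i) d x = 0
    rw [funext hk]
    simp [pd]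
  change ∑ j, pd (e j) (fun y => G y i j) x = b x i
  simp only [hGf, Finset.sum_sub_distrib, hgrad]
  have := congrFun (hlap i) x
  simp only at this
  rw [this]
  ring
end
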